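/- The series identity ∑_{n≥1} (−1/2^10)^n · ((1)_n)^5 / ((1/2)_n)^5 · [ (351 − 1755n + 2240n²)/n^10 − (11 H_n^{(5)} − H_{2n}^{(5)})(205n² − 160n + 32)/n^5 ] = −4 ζ(5,3) − π^8/4725 holds, where ζ(5,3) := ∑_{m>k≥1} 1/(m^5 k^3). -/

import Mathlib

/-- The rising factorial (Pochhammer symbol) `(a)ₙ = a(a+1)⋯(a+n-1)`. -/
noncomputable def risingFactorial (a : ℝ) (n : ℕ) : ℝ :=
  ∏ i ∈ Finset.range n, (a + i)

/-- The generalized harmonic number `H_n^{(s)} = ∑_{k=1}^n 1/k^s`. -/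
noncomputable def genHarmonic (s n : ℕ) : ℝ :=
  ∑ k ∈ Finset.range n, 1 / ((k : ℝ) + 1) ^ s

/-- The depth-two multiple zeta value `ζ(5,3) = ∑_{m>k≥1} 1/(m^5 k^3)`. -/
noncomputable def zeta53 : ℝ :=
  ∑' m : ℕ, (1 / ((m : ℝ) + 1) ^ 5) * ∑ k ∈ Finset.range m, 1 / ((k : ℝ) + 1) ^ 3

/-!
Over `ℝ[δ, q] / (δ², q²)` the hypergeometric term attached to the roots of `X⁴ + δX³ - q` belongs to
a Wilf-Zeilberger pair `(F, G)`, so that `∑ₙ G(n, 0) = ∑ₖ F(0, k)`. The theorem is the coefficient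
of `δq` in this identity. Every factor is a real number times an exponential, so the products turn
into factorials and harmonic numbers: `G(n, 0)` contributes the given summand and `F(0, k)` the
terms of `4ζ(3,5) + 4ζ(7,1) - 3ζ(8)`. Euler's sum formula in weight eight and the stuffle products
`ζ(2)ζ(6)` and `ζ(4)²` give `ζ(3,5) + ζ(5,3) + ζ(7,1) = ζ(8)/4`, which evaluates that combination
as `-4ζ(5,3) - 2ζ(8)`.
-/

open Filter Finset Topology
open scoped DualNumber Nat Ring

/-! ### Zeta values and double zeta values -/

theorem genHarmonic_zero (s : ℕ) : genHarmonic s 0 = 0 := sum_range_zero _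

theorem genHarmonic_succ (s n : ℕ) :
    genHarmonic s (n + 1) = genHarmonic s n + 1 / ((n : ℝ) + 1) ^ s :=
  sum_range_succ _ _

theorem genHarmonic_nonneg (s n : ℕ) : 0 ≤ genHarmonic s n :=
  sum_nonneg fun _ _ => by positivity

theorem genHarmonic_antitone (n : ℕ) : Antitone fun s => genHarmonic s n := fun s t hst =>
  sum_le_sum fun k _ => by
    gcongr
    linarith [k.cast_nonneg (α := ℝ)]

theorem genHarmonic_le_self (s n : ℕ) : genHarmonic s n ≤ n :=
  (genHarmonic_antitone n s.zero_le).trans_eq (by simp [genHarmonic])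

theorem genHarmonic_one_eq_harmonic (n : ℕ) : genHarmonic 1 n = harmonic n := by
  simp [genHarmonic, harmonic]

theorem genHarmonic_one_le_two_mul_sqrt (n : ℕ) : genHarmonic 1 n ≤ 2 * √n := by
  rcases n.eq_zero_or_pos with rfl | hn
  · simp [genHarmonic_zero]
  calc genHarmonic 1 n ≤ 1 + Real.log n := by
        rw [genHarmonic_one_eq_harmonic]
        exact harmonic_le_one_add_log n
    _ = 1 + 2 * Real.log √n := by rw [Real.log_sqrt n.cast_nonneg]; ring
    _ ≤ 1 + 2 * (√n - 1) := by gcongr; exact Real.log_le_sub_one_of_pos (by positivity)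
    _ ≤ 2 * √n := by linarith

theorem tendsto_genHarmonic_one_div_atTop :
    Tendsto (fun n : ℕ => genHarmonic 1 n / n) atTop (𝓝 0) := by
  have hzero : Tendsto (fun k : ℕ => 1 / ((k : ℝ) + 1) ^ 1) atTop (𝓝 0) := by
    simpa only [pow_one] using tendsto_one_div_add_atTop_nhds_zero_nat
  exact hzero.cesaro.congr fun n => by rw [genHarmonic, inv_mul_eq_div]

/-- The Riemann zeta value `ζ(s)` as a real number, for an integer `s ≥ 2`. -/
noncomputable def zetaValue (s : ℕ) : ℝ := ∑' n : ℕ, 1 / ((n : ℝ) + 1) ^ s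

/-- The summand of `ζ(s,t) = ∑_{m>k≥1} 1/(m^s k^t)` as a series in `m`, shifted to start at `0`. -/
noncomputable def doubleZetaTerm (s t m : ℕ) : ℝ := 1 / ((m : ℝ) + 1) ^ s * genHarmonic t m

/-- The double zeta value `ζ(s,t) = ∑_{m>k≥1} 1/(m^s k^t)`. -/
noncomputable def doubleZeta (s t : ℕ) : ℝ := ∑' m, doubleZetaTerm s t m

theorem summable_one_div_succ_pow {s : ℕ} (hs : 2 ≤ s) :
    Summable fun n : ℕ => 1 / ((n : ℝ) + 1) ^ s :=
  mod_cast (summable_nat_add_iff 1).2 (Real.summable_one_div_nat_pow.2 hs)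

theorem hasSum_zetaValue {s : ℕ} (hs : 2 ≤ s) :
    HasSum (fun n : ℕ => 1 / ((n : ℝ) + 1) ^ s) (zetaValue s) :=
  (summable_one_div_succ_pow hs).hasSum

theorem tendsto_genHarmonic {s : ℕ} (hs : 2 ≤ s) :
    Tendsto (genHarmonic s) atTop (𝓝 (zetaValue s)) :=
  (hasSum_zetaValue hs).tendsto_sum_nat

theorem zetaValue_eq_of_hasSum {s : ℕ} {x : ℝ} (hs : s ≠ 0)
    (h : HasSum (fun n : ℕ => 1 / (n : ℝ) ^ s) x) : zetaValue s = x := by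
  simpa [zetaValue, hs] using ((hasSum_nat_add_iff' 1).2 h).tsum_eq

theorem zetaValue_two : zetaValue 2 = Real.pi ^ 2 / 6 :=
  zetaValue_eq_of_hasSum two_ne_zero hasSum_zeta_two

theorem zetaValue_four : zetaValue 4 = Real.pi ^ 4 / 90 :=
  zetaValue_eq_of_hasSum four_ne_zero hasSum_zeta_four

theorem bernoulli'_six : bernoulli' 6 = 1 / 42 := by
  have h₅ := bernoulli'_eq_zero_of_odd (n := 5) (by decide) (by norm_num)
  have c₂ : Nat.choose 6 2 = 15 := by decide
  have c₄ : Nat.choose 6 4 = 15 := by decide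
  rw [bernoulli'_def]
  norm_num [sum_range_succ, c₂, c₄, h₅]

theorem bernoulli'_eight : bernoulli' 8 = -1 / 30 := by
  have h₅ := bernoulli'_eq_zero_of_odd (n := 5) (by decide) (by norm_num)
  have h₇ := bernoulli'_eq_zero_of_odd (n := 7) (by decide) (by norm_num)
  have c₂ : Nat.choose 8 2 = 28 := by decide
  have c₄ : Nat.choose 8 4 = 70 := by decide
  have c₆ : Nat.choose 8 6 = 28 := by decide
  rw [bernoulli'_def]
  norm_num [sum_range_succ, c₂, c₄, c₆, bernoulli'_six, h₅, h₇]

theorem zetaValue_six : zetaValue 6 = Real.pi ^ 6 / 945 := by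
  rw [zetaValue_eq_of_hasSum (by norm_num) (hasSum_zeta_nat (k := 3) (by norm_num)),
    bernoulli_eq_bernoulli'_of_ne_one (by norm_num), show 2 * 3 = 6 by norm_num, bernoulli'_six]
  norm_num [Nat.factorial]
  ring

theorem zetaValue_eight : zetaValue 8 = Real.pi ^ 8 / 9450 := by
  rw [zetaValue_eq_of_hasSum (by norm_num) (hasSum_zeta_nat (k := 4) (by norm_num)),
    bernoulli_eq_bernoulli'_of_ne_one (by norm_num), show 2 * 4 = 8 by norm_num, bernoulli'_eight]
  norm_num [Nat.factorial]
  ring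

theorem genHarmonic_le_two {s : ℕ} (hs : 2 ≤ s) (n : ℕ) : genHarmonic s n ≤ 2 :=
  calc genHarmonic s n ≤ genHarmonic 2 n := genHarmonic_antitone n hs
    _ ≤ zetaValue 2 := (hasSum_zetaValue le_rfl).summable.sum_le_tsum _ fun _ _ => by positivity
    _ ≤ 2 := by
      rw [zetaValue_two]
      nlinarith [Real.pi_pos, Real.pi_lt_d2]

theorem summable_doubleZetaTerm {s t : ℕ} (hs : 2 ≤ s) (ht : 1 ≤ t) :
    Summable (doubleZetaTerm s t) := by
  have hsum : Summable fun m : ℕ => 2 * (1 / ((m + 1 : ℕ) : ℝ) ^ (3 / 2 : ℝ)) :=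
    ((summable_nat_add_iff 1).2 (Real.summable_one_div_nat_rpow.2 (by norm_num))).mul_left 2
  refine hsum.of_nonneg_of_le
    (fun m => mul_nonneg (by positivity) (genHarmonic_nonneg t m)) fun m => ?_
  push_cast
  set x : ℝ := (m : ℝ) + 1 with hx
  have hx1 : 1 ≤ x := by simp [hx]
  have hxpow : x ^ 2 = x ^ (3 / 2 : ℝ) * √x := by
    rw [Real.sqrt_eq_rpow, ← Real.rpow_add (by positivity)]
    norm_num
  calc doubleZetaTerm s t m ≤ 1 / x ^ 2 * (2 * √x) := by
        refine mul_le_mul ?_ ?_ (genHarmonic_nonneg t m) (by positivity)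
        · gcongr
        · calc genHarmonic t m ≤ genHarmonic 1 m := genHarmonic_antitone m ht
            _ ≤ 2 * √m := genHarmonic_one_le_two_mul_sqrt m
            _ ≤ 2 * √x := by gcongr; linarith
    _ = 2 * (1 / x ^ (3 / 2 : ℝ)) := by
      rw [hxpow]
      field_simp

theorem genHarmonic_mul_genHarmonic (s t n : ℕ) :
    genHarmonic s n * genHarmonic t n =
      ∑ m ∈ range n, (doubleZetaTerm s t m + doubleZetaTerm t s m) + genHarmonic (s + t) n := by
  induction n with
  | zero => simp [genHarmonic_zero]
  | succ n ih =>
    have hpow : 1 / ((n : ℝ) + 1) ^ (s + t) =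
        1 / ((n : ℝ) + 1) ^ s * (1 / ((n : ℝ) + 1) ^ t) := by
      rw [pow_add, one_div_mul_one_div]
    simp only [sum_range_succ, genHarmonic_succ, hpow, doubleZetaTerm] at ih ⊢
    linear_combination ih

theorem zetaValue_mul_zetaValue {s t : ℕ} (hs : 2 ≤ s) (ht : 2 ≤ t) :
    zetaValue s * zetaValue t = doubleZeta s t + doubleZeta t s + zetaValue (s + t) := by
  have hsum := ((summable_doubleZetaTerm hs (one_le_two.trans ht)).hasSum.add
    (summable_doubleZetaTerm ht (one_le_two.trans hs)).hasSum).tendsto_sum_nat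
  refine tendsto_nhds_unique ((tendsto_genHarmonic hs).mul (tendsto_genHarmonic ht))
    ((hsum.add (tendsto_genHarmonic (le_add_right hs))).congr fun n => ?_)
  exact (genHarmonic_mul_genHarmonic s t n).symm

/-- The defect of the sum formula `∑ ζ(i+2, j+1) = ζ(p+3)` over `i + j = p`, when every series is
truncated at `n`; the inner sum is `H_n - H_{n-1-k}`. -/
noncomputable def sumFormulaDefect (p n : ℕ) : ℝ :=
  ∑ k ∈ range n, 1 / ((k : ℝ) + 1) ^ (p + 2) * ∑ j ∈ range (k + 1), 1 / ((n : ℝ) - j)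

theorem sum_range_one_div_sub (n : ℕ) :
    ∑ k ∈ range n, 1 / ((n : ℝ) - k) = genHarmonic 1 n := by
  rw [genHarmonic, ← sum_range_reflect]
  refine sum_congr rfl fun k hk => ?_
  rw [Nat.cast_sub (Nat.le_sub_one_of_lt (mem_range.1 hk)), Nat.cast_pred (by grind), pow_one]
  congr 1
  ring

theorem sum_range_one_div_mul_sub (n : ℕ) :
    ∑ k ∈ range n, 1 / (((k : ℝ) + 1) * (n - k)) = 2 * (genHarmonic 1 n / (n + 1)) :=
  calc ∑ k ∈ range n, 1 / (((k : ℝ) + 1) * (n - k))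
      = ∑ k ∈ range n, (1 / ((k : ℝ) + 1) ^ 1 + 1 / ((n : ℝ) - k)) / (n + 1) := by
        refine sum_congr rfl fun k hk => ?_
        have hk' : (n : ℝ) - k ≠ 0 := (sub_pos.2 (Nat.cast_lt.2 (mem_range.1 hk))).ne'
        field_simp
        ring
    _ = 2 * (genHarmonic 1 n / (n + 1)) := by
        rw [← sum_div, sum_add_distrib, sum_range_one_div_sub, ← genHarmonic]
        ring

theorem sumFormulaDefect_nonneg (p n : ℕ) : 0 ≤ sumFormulaDefect p n :=
  sum_nonneg fun k hk => mul_nonneg (by positivity) <| sum_nonneg fun j hj =>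
    one_div_nonneg.2 <| sub_nonneg.2 <| Nat.cast_le.2 <| by grind

theorem sumFormulaDefect_le (p n : ℕ) : sumFormulaDefect p n ≤ 2 * (genHarmonic 1 n / n) := by
  have hinner {k : ℕ} (hk : k < n) :
      ∑ j ∈ range (k + 1), 1 / ((n : ℝ) - j) ≤ ((k : ℝ) + 1) * (1 / (n - k)) := by
    refine (sum_le_card_nsmul _ _ (1 / ((n : ℝ) - k)) fun j hj => ?_).trans_eq (by simp)
    have hnk : (k : ℝ) < n := Nat.cast_lt.2 hk
    have hjk : (j : ℝ) ≤ k := Nat.cast_le.2 (Nat.lt_succ_iff.1 (mem_range.1 hj))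
    gcongr
  calc sumFormulaDefect p n ≤ ∑ k ∈ range n, 1 / (((k : ℝ) + 1) * (n - k)) := by
        refine sum_le_sum fun k hk => ?_
        have hnk : 0 < (n : ℝ) - k := sub_pos.2 (Nat.cast_lt.2 (mem_range.1 hk))
        calc _ ≤ 1 / ((k : ℝ) + 1) ^ 2 * (((k : ℝ) + 1) * (1 / (n - k))) := by
              refine mul_le_mul ?_ (hinner (mem_range.1 hk)) ?_ (by positivity)
              · gcongr <;> simp
              · exact sum_nonneg fun j hj => one_div_nonneg.2 <| sub_nonneg.2 <|
                  Nat.cast_le.2 <| by grind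
          _ = 1 / (((k : ℝ) + 1) * (n - k)) := by field_simp
    _ = 2 * (genHarmonic 1 n / (n + 1)) := sum_range_one_div_mul_sub n
    _ ≤ 2 * (genHarmonic 1 n / n) := by
        rcases n.eq_zero_or_pos with rfl | hn
        · simp [genHarmonic_zero]
        · have := genHarmonic_nonneg 1 n
          gcongr
          simp

theorem tendsto_sumFormulaDefect (p : ℕ) : Tendsto (sumFormulaDefect p) atTop (𝓝 0) :=
  squeeze_zero (sumFormulaDefect_nonneg p) (sumFormulaDefect_le p)
    (by simpa using tendsto_genHarmonic_one_div_atTop.const_mul 2)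

theorem sum_antidiagonal_one_div_pow_mul_one_div_pow {K : Type*} [Field K] {a b : K} (ha : a ≠ 0)
    (hb : b ≠ 0) (hab : a ≠ b) (p : ℕ) :
    ∑ ij ∈ antidiagonal p, 1 / a ^ (ij.1 + 2) * (1 / b ^ (ij.2 + 1)) =
      1 / b ^ (p + 2) * (1 / (a - b) - 1 / a) - 1 / a ^ (p + 2) * (1 / (a - b)) := by
  have hab' : a - b ≠ 0 := sub_ne_zero.2 hab
  induction p with
  | zero => simp; field_simp; ring
  | succ p ih =>
    have hterm (i j : ℕ) : 1 / a ^ (i + 1 + 2) * (1 / b ^ (j + 1)) =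
        1 / a * (1 / a ^ (i + 2) * (1 / b ^ (j + 1))) := by ring
    simp only [Nat.sum_antidiagonal_succ, hterm, ← mul_sum, ih]
    field_simp
    ring

theorem sumFormulaDefect_succ_sub (p n : ℕ) :
    sumFormulaDefect p (n + 1) - sumFormulaDefect p n =
      1 / ((n : ℝ) + 1) ^ (p + 2) * genHarmonic 1 (n + 1) +
        ∑ k ∈ range n, 1 / ((k : ℝ) + 1) ^ (p + 2) * (1 / ((n : ℝ) + 1) - 1 / ((n : ℝ) - k)) := by
  have hlast : ∑ j ∈ range (n + 1), 1 / (((n + 1 : ℕ) : ℝ) - j) = genHarmonic 1 (n + 1) :=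
    sum_range_one_div_sub (n + 1)
  have hshift (k : ℕ) : ∑ j ∈ range (k + 1), 1 / (((n + 1 : ℕ) : ℝ) - j) =
      ∑ j ∈ range (k + 1), 1 / ((n : ℝ) - j) + (1 / ((n : ℝ) + 1) - 1 / ((n : ℝ) - k)) := by
    rw [sum_range_succ', sum_range_succ]
    push_cast
    simp only [add_sub_add_right_eq_sub]
    ring
  rw [sumFormulaDefect, sum_range_succ, hlast, sumFormulaDefect]
  simp only [hshift, mul_add, sum_add_distrib]
  ring

theorem sum_doubleZetaTerm_antidiagonal (p n : ℕ) :
    ∑ ij ∈ antidiagonal p, doubleZetaTerm (ij.1 + 2) (ij.2 + 1) n =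
      1 / ((n : ℝ) + 1) ^ (p + 3) -
        (sumFormulaDefect p (n + 1) - sumFormulaDefect p n) := by
  have hinner {k : ℕ} (hk : k ∈ range n) :
      ∑ ij ∈ antidiagonal p, 1 / ((n : ℝ) + 1) ^ (ij.1 + 2) * (1 / ((k : ℝ) + 1) ^ (ij.2 + 1)) =
        1 / ((k : ℝ) + 1) ^ (p + 2) * (1 / ((n : ℝ) - k) - 1 / ((n : ℝ) + 1)) -
          1 / ((n : ℝ) + 1) ^ (p + 2) * (1 / ((n : ℝ) - k)) := by
    rw [sum_antidiagonal_one_div_pow_mul_one_div_pow (by positivity) (by positivity),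
      add_sub_add_right_eq_sub]
    exact_mod_cast (Nat.succ_lt_succ (mem_range.1 hk)).ne'
  have hpow : 1 / ((n : ℝ) + 1) ^ (p + 3) =
      1 / ((n : ℝ) + 1) ^ (p + 2) * (1 / ((n : ℝ) + 1) ^ 1) := by
    rw [one_div_mul_one_div, ← pow_add]
  simp only [doubleZetaTerm, genHarmonic, mul_sum]
  rw [sum_comm, sum_congr rfl fun k => hinner, sum_sub_distrib, ← mul_sum, sum_range_one_div_sub,
    sumFormulaDefect_succ_sub, genHarmonic_succ]
  simp only [mul_sub, sum_sub_distrib]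
  linear_combination -hpow

theorem sum_doubleZeta_antidiagonal (p : ℕ) :
    ∑ ij ∈ antidiagonal p, doubleZeta (ij.1 + 2) (ij.2 + 1) = zetaValue (p + 3) := by
  have hterms : HasSum (fun n => ∑ ij ∈ antidiagonal p, doubleZetaTerm (ij.1 + 2) (ij.2 + 1) n)
      (∑ ij ∈ antidiagonal p, doubleZeta (ij.1 + 2) (ij.2 + 1)) :=
    hasSum_sum fun ij _ => (summable_doubleZetaTerm (by omega) (by omega)).hasSum
  refine tendsto_nhds_unique hterms.tendsto_sum_nat ?_
  have hlim := (tendsto_genHarmonic (show 2 ≤ p + 3 by omega)).sub (tendsto_sumFormulaDefect p)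
  rw [sub_zero] at hlim
  refine hlim.congr fun n => ?_
  have hzero : sumFormulaDefect p 0 = 0 := sum_range_zero _
  rw [sum_congr rfl fun m _ => sum_doubleZetaTerm_antidiagonal p m, sum_sub_distrib,
    sum_range_sub, hzero, sub_zero, genHarmonic]

theorem doubleZeta_odd_weight_eight :
    doubleZeta 3 5 + doubleZeta 5 3 + doubleZeta 7 1 = Real.pi ^ 8 / 37800 := by
  have hsum : doubleZeta 2 6 + (doubleZeta 3 5 + (doubleZeta 4 4 + (doubleZeta 5 3 +
      (doubleZeta 6 2 + doubleZeta 7 1)))) = zetaValue 8 := by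
    simpa [Nat.sum_antidiagonal_succ] using sum_doubleZeta_antidiagonal 5
  have h26 := zetaValue_mul_zetaValue (s := 2) (t := 6) (by norm_num) (by norm_num)
  have h44 := zetaValue_mul_zetaValue (s := 4) (t := 4) (by norm_num) (by norm_num)
  norm_num only [zetaValue_two, zetaValue_four, zetaValue_six, zetaValue_eight] at hsum h26 h44
  linear_combination hsum + h26 + h44 / 2

/-! ### The Wilf-Zeilberger pair -/

theorem hasSum_of_wz_pair {E : Type*} [AddCommGroup E] [UniformSpace E] [IsUniformAddGroup E]
    [CompleteSpace E] [T2Space E] {F G : ℕ → ℕ → E} (hF : Summable (Function.uncurry F))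
    (hG : ∀ n, Tendsto (G n) atTop (𝓝 0))
    (hFG : ∀ n k, F n k - F (n + 1) k = G n k - G n (k + 1)) :
    HasSum (fun n => G n 0) (∑' k, F 0 k) := by
  have hrow (n : ℕ) : Summable (F n) := hF.prod_factor n
  have hcolumn (n : ℕ) : ∑' k, F n k - ∑' k, F (n + 1) k = G n 0 := by
    refine tendsto_nhds_unique ((hrow n).hasSum.sub (hrow (n + 1)).hasSum).tendsto_sum_nat ?_
    simp only [hFG, sum_range_sub']
    simpa only [sub_zero] using (hG n).const_sub (G n 0)
  have hsum := hF.prod.hasSum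
  simpa [hcolumn] using hsum.sub ((hasSum_nat_add_iff' 1).2 hsum)

section WZPair

variable {A : Type*} [CommRing A] (δ q : A)

/-- The product of `T + δ + wᵢ` over the roots `wᵢ` of `X⁴ + δX³ - q`. -/
def numFactor (T : A) : A := T * (T + δ) ^ 3 - q

/-- The product of `T - wᵢ` over the roots `wᵢ` of `X⁴ + δX³ - q`. -/
def denFactor (T : A) : A := T ^ 3 * (T + δ) - q

/-- The product of `T + wᵢ + wⱼ`, `i < j`, over the roots `wᵢ` of `X⁴ + δX³ - q`. -/
def pairFactor (T : A) : A := (T * (T - δ)) ^ 3 + 4 * q * (T * (T - δ)) + δ ^ 2 * q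

/-- The hypergeometric term of the Wilf-Zeilberger pair: the signed quotient of shifted factorials
built from `pairFactor`, `numFactor`, `denFactor` and `T - δ`, with `n`, `s`, `d` and `e` factors
respectively. -/
noncomputable def hypTerm (n s d e : ℕ) : A :=
  (-1) ^ n * (∏ j ∈ range n, pairFactor δ q (j + 1 : ℕ)) *
    (∏ j ∈ range s, numFactor δ q (j + 1 : ℕ)) *
    (∏ j ∈ range d, denFactor δ q (j + 1 : ℕ))⁻¹ʳ * (∏ j ∈ range e, (((j + 1 : ℕ) : A) - δ))⁻¹ʳ

/-- The first function of the Wilf-Zeilberger pair. -/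
noncomputable def wzF (n k : ℕ) : A :=
  (3 * n + 2 * k + 2 + δ) * hypTerm δ q n (n + k) (2 * n + k + 1) (2 * n)

/-- The part of the second function of the Wilf-Zeilberger pair that is added to `wzF`. -/
noncomputable def wzRemainder (n k : ℕ) : A :=
  ((2 * n + 2 - δ) * (2 * n + k + 2) * (3 * n + k + 3) + (n + 1) ^ 2 * (n + 1 - δ)) *
    hypTerm δ q n (n + k + 1) (2 * n + k + 2) (2 * n + 2)

/-- The second function of the Wilf-Zeilberger pair. -/
noncomputable def wzG (n k : ℕ) : A := wzF δ q n k + wzRemainder δ q n k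

theorem hypTerm_succ_pair (n s d e : ℕ) :
    hypTerm δ q (n + 1) s d e = -pairFactor δ q (n + 1 : ℕ) * hypTerm δ q n s d e := by
  rw [hypTerm, prod_range_succ, hypTerm]
  ring

theorem hypTerm_succ_num (n s d e : ℕ) :
    hypTerm δ q n (s + 1) d e = numFactor δ q (s + 1 : ℕ) * hypTerm δ q n s d e := by
  rw [hypTerm, prod_range_succ, hypTerm]
  ring

variable {δ q}

theorem hypTerm_eq_denFactor_mul {d : ℕ} (hd : IsUnit (denFactor δ q (d + 1 : ℕ))) (n s e : ℕ) :
    hypTerm δ q n s d e = denFactor δ q (d + 1 : ℕ) * hypTerm δ q n s (d + 1) e := by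
  simp only [hypTerm, prod_range_succ_comm _ d, Ring.mul_inverse_rev, mul_assoc,
    mul_left_comm (denFactor δ q (d + 1 : ℕ)), Ring.inverse_mul_cancel_left _ _ hd]

theorem hypTerm_eq_sub_mul {e : ℕ} (he : IsUnit (((e + 1 : ℕ) : A) - δ)) (n s d : ℕ) :
    hypTerm δ q n s d e = (((e + 1 : ℕ) : A) - δ) * hypTerm δ q n s d (e + 1) := by
  simp only [hypTerm, prod_range_succ _ e, Ring.mul_inverse_rev, mul_assoc,
    mul_left_comm (((e + 1 : ℕ) : A) - δ), Ring.inverse_mul_cancel_left _ _ he]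

theorem wzF_sub_wzF_succ (hden : ∀ j : ℕ, IsUnit (denFactor δ q (j + 1 : ℕ)))
    (hlin : ∀ j : ℕ, IsUnit (((j + 1 : ℕ) : A) - δ)) (n k : ℕ) :
    wzF δ q n k - wzF δ q (n + 1) k = wzG δ q n k - wzG δ q n (k + 1) := by
  -- Every term is a polynomial multiple of one common hypergeometric term.
  have hF : hypTerm δ q (n + 1) (n + 1 + k) (2 * (n + 1) + k + 1) (2 * (n + 1)) =
      -pairFactor δ q (n + 1 : ℕ) * (numFactor δ q (n + k + 1 : ℕ) *
        hypTerm δ q n (n + k) (2 * n + k + 3) (2 * n + 2)) := by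
    rw [hypTerm_succ_pair, ← hypTerm_succ_num]
    ring_nf
  have hR : hypTerm δ q n (n + k + 1) (2 * n + k + 2) (2 * n + 2) =
      numFactor δ q (n + k + 1 : ℕ) * (denFactor δ q (2 * n + k + 3 : ℕ) *
        hypTerm δ q n (n + k) (2 * n + k + 3) (2 * n + 2)) := by
    rw [hypTerm_succ_num, hypTerm_eq_denFactor_mul (hden _)]
  have hF' : hypTerm δ q n (n + (k + 1)) (2 * n + (k + 1) + 1) (2 * n) =
      ((2 * n + 1 : ℕ) - δ) * (((2 * n + 2 : ℕ) - δ) * (numFactor δ q (n + k + 1 : ℕ) *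
        (denFactor δ q (2 * n + k + 3 : ℕ) *
          hypTerm δ q n (n + k) (2 * n + k + 3) (2 * n + 2)))) := by
    rw [← hR, hypTerm_eq_sub_mul (hlin _), hypTerm_eq_sub_mul (hlin _)]
    ring_nf
  have hR' : hypTerm δ q n (n + (k + 1) + 1) (2 * n + (k + 1) + 2) (2 * n + 2) =
      numFactor δ q (n + k + 2 : ℕ) * (numFactor δ q (n + k + 1 : ℕ) *
        hypTerm δ q n (n + k) (2 * n + k + 3) (2 * n + 2)) := by
    rw [← hypTerm_succ_num, ← hypTerm_succ_num]
    ring_nf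
  rw [wzG, wzG, wzRemainder, wzRemainder, wzF, wzF, wzF, hF, hR, hF', hR']
  simp only [numFactor, denFactor, pairFactor]
  push_cast
  ring

end WZPair

/-! ### Expansion in `δ` and `q` -/

section Expansion

variable {K A : Type*} [Field K] [CommRing A] [Algebra K A] (δ q : A)

/-- The exponential of `aδ + bq + cδq` when `δ² = q² = 0`. -/
def biExp (a b c : K) : A := 1 + a • δ + b • q + (c + a * b) • (δ * q)

theorem biExp_zero : biExp δ q (0 : K) 0 0 = 1 := by simp [biExp]

variable {δ q}

theorem biExp_mul_biExp (hδ : δ ^ 2 = 0) (hq : q ^ 2 = 0) (a b c a' b' c' : K) :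
    biExp δ q a b c * biExp δ q a' b' c' = biExp δ q (a + a') (b + b') (c + c') := by
  simp only [biExp, Algebra.smul_def, map_add, map_mul]
  grind

theorem prod_smul_biExp (hδ : δ ^ 2 = 0) (hq : q ^ 2 = 0) {ι : Type*} (s : Finset ι)
    (r a b c : ι → K) :
    ∏ i ∈ s, r i • biExp δ q (a i) (b i) (c i) =
      (∏ i ∈ s, r i) • biExp δ q (∑ i ∈ s, a i) (∑ i ∈ s, b i) (∑ i ∈ s, c i) := by
  classical
  induction s using Finset.induction_on with
  | empty => simp [biExp_zero]
  | insert i s hi ih =>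
    simp only [prod_insert hi, sum_insert hi, ih, smul_mul_smul_comm, biExp_mul_biExp hδ hq]

theorem smul_biExp_mul_cancel (hδ : δ ^ 2 = 0) (hq : q ^ 2 = 0) {r : K} (hr : r ≠ 0) (a b c : K) :
    r • biExp δ q a b c * r⁻¹ • biExp δ q (-a) (-b) (-c) = 1 := by
  simp [biExp_mul_biExp hδ hq, biExp_zero, hr]

theorem isUnit_smul_biExp (hδ : δ ^ 2 = 0) (hq : q ^ 2 = 0) {r : K} (hr : r ≠ 0) (a b c : K) :
    IsUnit (r • biExp δ q a b c) :=
  .of_mul_eq_one _ (smul_biExp_mul_cancel hδ hq hr a b c)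

theorem inverse_smul_biExp (hδ : δ ^ 2 = 0) (hq : q ^ 2 = 0) {r : K} (hr : r ≠ 0) (a b c : K) :
    (r • biExp δ q a b c)⁻¹ʳ = r⁻¹ • biExp δ q (-a) (-b) (-c) := by
  rw [← mul_one (_)⁻¹ʳ, Ring.inverse_mul_eq_iff_eq_mul _ _ _ (isUnit_smul_biExp hδ hq hr a b c),
    smul_biExp_mul_cancel hδ hq hr]

theorem add_smul_mul_biExp (hδ : δ ^ 2 = 0) (x y a b c : K) :
    (algebraMap K A x + y • δ) * biExp δ q a b c =
      x • 1 + (x * a + y) • δ + (x * b) • q + (x * (c + a * b) + y * b) • (δ * q) := by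
  simp only [biExp, Algebra.smul_def, map_add, map_mul]
  grind

variable [CharZero K]

theorem numFactor_eq_smul_biExp (hδ : δ ^ 2 = 0) {T : ℕ} (hT : T ≠ 0) :
    numFactor δ q (T : A) = (T : K) ^ 4 • biExp δ q (3 / T : K) (-1 / T ^ 4) (3 / T ^ 5) := by
  have hexpand : numFactor δ q (T : A) = (T ^ 4 : K) • (1 : A) + (3 * T ^ 3 : K) • δ - q := by
    simp only [numFactor, Algebra.smul_def, map_mul, map_pow, map_natCast, map_ofNat]
    grind
  rw [hexpand, biExp]
  match_scalars <;> field_simp [Nat.cast_ne_zero (R := K).2 hT]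
  ring

theorem denFactor_eq_smul_biExp (δ q : A) {T : ℕ} (hT : T ≠ 0) :
    denFactor δ q (T : A) = (T : K) ^ 4 • biExp δ q (1 / T : K) (-1 / T ^ 4) (1 / T ^ 5) := by
  have hexpand : denFactor δ q (T : A) = (T ^ 4 : K) • (1 : A) + (T ^ 3 : K) • δ - q := by
    simp only [denFactor, Algebra.smul_def, map_pow, map_natCast]
    grind
  rw [hexpand, biExp]
  match_scalars <;> field_simp [Nat.cast_ne_zero (R := K).2 hT]
  ring

theorem pairFactor_eq_smul_biExp (hδ : δ ^ 2 = 0) {T : ℕ} (hT : T ≠ 0) :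
    pairFactor δ q (T : A) = (T : K) ^ 6 • biExp δ q (-3 / T : K) (4 / T ^ 4) (8 / T ^ 5) := by
  have hexpand : pairFactor δ q (T : A) =
      (T ^ 6 : K) • (1 : A) - (3 * T ^ 5 : K) • δ + (4 * T ^ 2 : K) • q -
        (4 * T : K) • (δ * q) := by
    simp only [pairFactor, Algebra.smul_def, map_mul, map_pow, map_natCast, map_ofNat]
    grind
  rw [hexpand, biExp]
  match_scalars <;> field_simp [Nat.cast_ne_zero (R := K).2 hT]
  ring

theorem natCast_sub_eq_smul_biExp (δ q : A) {T : ℕ} (hT : T ≠ 0) :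
    (T : A) - δ = (T : K) • biExp δ q (-1 / T : K) 0 0 := by
  have hcast : (T : A) = (T : K) • (1 : A) := by simp [Algebra.smul_def]
  rw [hcast, biExp]
  match_scalars <;> field_simp [Nat.cast_ne_zero (R := K).2 hT] <;> ring

end Expansion

section HypTerm

theorem sum_range_div_succ_pow (r : ℝ) (s n : ℕ) :
    ∑ j ∈ range n, r / ((j + 1 : ℕ) : ℝ) ^ s = r * genHarmonic s n := by
  simp [genHarmonic, mul_sum, div_eq_mul_inv]

theorem sum_range_div_succ (r : ℝ) (n : ℕ) :
    ∑ j ∈ range n, r / ((j + 1 : ℕ) : ℝ) = r * genHarmonic 1 n := by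
  simpa only [pow_one] using sum_range_div_succ_pow r 1 n

theorem prod_range_cast_succ (n : ℕ) : ∏ j ∈ range n, ((j + 1 : ℕ) : ℝ) = n ! := by
  rw [← Nat.cast_prod, prod_range_add_one_eq_factorial]

variable {A : Type*} [CommRing A] [Algebra ℝ A] {δ q : A}

theorem prod_pairFactor (hδ : δ ^ 2 = 0) (hq : q ^ 2 = 0) (n : ℕ) :
    ∏ j ∈ range n, pairFactor δ q (j + 1 : ℕ) = (n ! : ℝ) ^ 6 •
      biExp δ q (-3 * genHarmonic 1 n) (4 * genHarmonic 4 n) (8 * genHarmonic 5 n) := by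
  rw [prod_congr rfl fun j _ => pairFactor_eq_smul_biExp (K := ℝ) hδ j.succ_ne_zero,
    prod_smul_biExp hδ hq, prod_pow, prod_range_cast_succ, sum_range_div_succ,
    sum_range_div_succ_pow, sum_range_div_succ_pow]

theorem prod_numFactor (hδ : δ ^ 2 = 0) (hq : q ^ 2 = 0) (n : ℕ) :
    ∏ j ∈ range n, numFactor δ q (j + 1 : ℕ) = (n ! : ℝ) ^ 4 •
      biExp δ q (3 * genHarmonic 1 n) (-1 * genHarmonic 4 n) (3 * genHarmonic 5 n) := by
  rw [prod_congr rfl fun j _ => numFactor_eq_smul_biExp (K := ℝ) hδ j.succ_ne_zero,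
    prod_smul_biExp hδ hq, prod_pow, prod_range_cast_succ, sum_range_div_succ,
    sum_range_div_succ_pow, sum_range_div_succ_pow]

theorem prod_denFactor (hδ : δ ^ 2 = 0) (hq : q ^ 2 = 0) (n : ℕ) :
    ∏ j ∈ range n, denFactor δ q (j + 1 : ℕ) = (n ! : ℝ) ^ 4 •
      biExp δ q (1 * genHarmonic 1 n) (-1 * genHarmonic 4 n) (1 * genHarmonic 5 n) := by
  rw [prod_congr rfl fun j _ => denFactor_eq_smul_biExp (K := ℝ) δ q j.succ_ne_zero,
    prod_smul_biExp hδ hq, prod_pow, prod_range_cast_succ, sum_range_div_succ,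
    sum_range_div_succ_pow, sum_range_div_succ_pow]

theorem prod_natCast_sub (hδ : δ ^ 2 = 0) (hq : q ^ 2 = 0) (n : ℕ) :
    ∏ j ∈ range n, (((j + 1 : ℕ) : A) - δ) =
      (n ! : ℝ) • biExp δ q (-1 * genHarmonic 1 n) 0 0 := by
  rw [prod_congr rfl fun j _ => natCast_sub_eq_smul_biExp (K := ℝ) δ q j.succ_ne_zero,
    prod_smul_biExp hδ hq, prod_range_cast_succ, sum_range_div_succ, sum_const_zero]

/-- The constant coefficient of `hypTerm`. -/
noncomputable def hypConst (n s d e : ℕ) : ℝ :=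
  (-1) ^ n * (n ! : ℝ) ^ 6 * (s ! : ℝ) ^ 4 / ((d ! : ℝ) ^ 4 * e !)

/-- The coefficient of `δ` in the logarithm of `hypTerm`. -/
noncomputable def hypLogδ (n s d e : ℕ) : ℝ :=
  3 * genHarmonic 1 s - 3 * genHarmonic 1 n - genHarmonic 1 d + genHarmonic 1 e

/-- The coefficient of `q` in the logarithm of `hypTerm`. -/
noncomputable def hypLogq (n s d : ℕ) : ℝ :=
  4 * genHarmonic 4 n - genHarmonic 4 s + genHarmonic 4 d

/-- The coefficient of `δq` in the logarithm of `hypTerm`. -/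
noncomputable def hypLogδq (n s d : ℕ) : ℝ :=
  8 * genHarmonic 5 n + 3 * genHarmonic 5 s - genHarmonic 5 d

theorem hypTerm_eq_smul_biExp (hδ : δ ^ 2 = 0) (hq : q ^ 2 = 0) (n s d e : ℕ) :
    hypTerm δ q n s d e = hypConst n s d e •
      biExp δ q (hypLogδ n s d e) (hypLogq n s d) (hypLogδq n s d) := by
  have hd : (d ! : ℝ) ^ 4 ≠ 0 := by positivity
  have he : (e ! : ℝ) ≠ 0 := by positivity
  rw [hypTerm, prod_pairFactor hδ hq, prod_numFactor hδ hq, prod_denFactor hδ hq,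
    prod_natCast_sub hδ hq, inverse_smul_biExp hδ hq hd, inverse_smul_biExp hδ hq he,
    show (-1 : A) ^ n = (-1 : ℝ) ^ n • 1 by simp [Algebra.smul_def]]
  simp only [smul_mul_smul_comm, one_mul, biExp_mul_biExp hδ hq]
  congr 1
  · rw [hypConst]
    field_simp
  · rw [hypLogδ, hypLogq, hypLogδq]
    congr 1 <;> ring

end HypTerm

section MixedCoefficient

/-- The coefficient of `δq` in `(x + yδ) * hypTerm δ q n s d e`, where `δ² = q² = 0`. -/
noncomputable def hypCoeff (x y : ℝ) (n s d e : ℕ) : ℝ :=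
  hypConst n s d e *
    (x * (hypLogδq n s d + hypLogδ n s d e * hypLogq n s d) + y * hypLogq n s d)

/-- The coefficient of `δq` in `wzF δ q n k`, where `δ² = q² = 0`. -/
noncomputable def wzFCoeff (n k : ℕ) : ℝ :=
  hypCoeff (3 * n + 2 * k + 2) 1 n (n + k) (2 * n + k + 1) (2 * n)

/-- The coefficient of `δq` in `wzRemainder δ q n k`, where `δ² = q² = 0`. -/
noncomputable def wzRemainderCoeff (n k : ℕ) : ℝ :=
  hypCoeff ((2 * n + 2) * (2 * n + k + 2) * (3 * n + k + 3) + (n + 1) ^ 3)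
    (-((2 * n + k + 2) * (3 * n + k + 3) + (n + 1) ^ 2))
    n (n + k + 1) (2 * n + k + 2) (2 * n + 2)

/-- The coefficient of `δq` in `wzG δ q n k`, where `δ² = q² = 0`. -/
noncomputable def wzGCoeff (n k : ℕ) : ℝ := wzFCoeff n k + wzRemainderCoeff n k

variable {A : Type*} [CommRing A] [Algebra ℝ A] {δ q : A} {ℓ : A →ₗ[ℝ] ℝ} (hδ : δ ^ 2 = 0)
  (hq : q ^ 2 = 0) (hℓ : ∀ x y z w : ℝ, ℓ (x • 1 + y • δ + z • q + w • (δ * q)) = w)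

include hδ hq hℓ

theorem map_add_smul_mul_hypTerm (x y : ℝ) (n s d e : ℕ) :
    ℓ ((algebraMap ℝ A x + y • δ) * hypTerm δ q n s d e) = hypCoeff x y n s d e := by
  rw [hypTerm_eq_smul_biExp hδ hq, mul_smul_comm, add_smul_mul_biExp hδ, map_smul, hℓ, hypCoeff,
    smul_eq_mul]

theorem map_wzF (n k : ℕ) : ℓ (wzF δ q n k) = wzFCoeff n k := by
  rw [wzF, wzFCoeff, ← map_add_smul_mul_hypTerm hδ hq hℓ]
  simp only [map_add, map_mul, map_natCast, map_ofNat, one_smul]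

theorem map_wzRemainder (n k : ℕ) : ℓ (wzRemainder δ q n k) = wzRemainderCoeff n k := by
  rw [wzRemainder, wzRemainderCoeff, ← map_add_smul_mul_hypTerm hδ hq hℓ]
  simp only [Algebra.smul_def, map_neg, map_add, map_mul, map_pow, map_natCast, map_ofNat, map_one]
  congr 2
  ring

theorem wzFCoeff_sub_wzFCoeff_succ_of_map (n k : ℕ) :
    wzFCoeff n k - wzFCoeff (n + 1) k = wzGCoeff n k - wzGCoeff n (k + 1) := by
  have hden (j : ℕ) : IsUnit (denFactor δ q (j + 1 : ℕ)) := by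
    rw [denFactor_eq_smul_biExp (K := ℝ) δ q j.succ_ne_zero]
    exact isUnit_smul_biExp hδ hq (by positivity) _ _ _
  have hlin (j : ℕ) : IsUnit (((j + 1 : ℕ) : A) - δ) := by
    rw [natCast_sub_eq_smul_biExp (K := ℝ) δ q j.succ_ne_zero]
    exact isUnit_smul_biExp hδ hq (by positivity) _ _ _
  simpa only [wzG, map_sub, map_add, map_wzF hδ hq hℓ, map_wzRemainder hδ hq hℓ, wzGCoeff] using
    congrArg ℓ (wzF_sub_wzF_succ hden hlin n k)

end MixedCoefficient

theorem wzFCoeff_sub_wzFCoeff_succ (n k : ℕ) :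
    wzFCoeff n k - wzFCoeff (n + 1) k = wzGCoeff n k - wzGCoeff n (k + 1) := by
  let mixedCoeff : ℝ[ε][ε] →ₗ[ℝ] ℝ :=
    { toFun z := z.snd.snd, map_add' _ _ := rfl, map_smul' _ _ := rfl }
  refine wzFCoeff_sub_wzFCoeff_succ_of_map (δ := (ε : ℝ[ε][ε])) (q := TrivSqZeroExt.inl ε)
    (ℓ := mixedCoeff) ?_ ?_ (fun x y z w => ?_) n k
  · rw [sq, DualNumber.eps_mul_eps]
  · rw [sq, ← TrivSqZeroExt.inl_mul, DualNumber.eps_mul_eps, TrivSqZeroExt.inl_zero]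
  · change (x • 1 + y • ε + z • TrivSqZeroExt.inl ε + w • (ε * TrivSqZeroExt.inl ε) :
      ℝ[ε][ε]).snd.snd = w
    simp

/-! ### Convergence and boundary values -/

section Bounds

theorem abs_hypLogδ_le (n s d e : ℕ) : |hypLogδ n s d e| ≤ 3 * n + 3 * s + d + e := by
  have hnonneg := genHarmonic_nonneg 1
  have hle := genHarmonic_le_self 1
  rw [hypLogδ, abs_le]
  constructor <;> linarith [hnonneg n, hnonneg s, hnonneg d, hnonneg e, hle n, hle s, hle d, hle e]

theorem abs_hypLogq_le (n s d : ℕ) : |hypLogq n s d| ≤ 12 := by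
  have hnonneg := genHarmonic_nonneg 4
  have hle := genHarmonic_le_two (s := 4) (by norm_num)
  rw [hypLogq, abs_le]
  constructor <;> linarith [hnonneg n, hnonneg s, hnonneg d, hle n, hle s, hle d]

theorem abs_hypLogδq_le (n s d : ℕ) : |hypLogδq n s d| ≤ 24 := by
  have hnonneg := genHarmonic_nonneg 5
  have hle := genHarmonic_le_two (s := 5) (by norm_num)
  rw [hypLogδq, abs_le]
  constructor <;> linarith [hnonneg n, hnonneg s, hnonneg d, hle n, hle s, hle d]

theorem two_pow_mul_factorial_sq_le (n : ℕ) : 2 ^ n * n ! ^ 2 ≤ (2 * n)! := by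
  induction n with
  | zero => simp
  | succ n ih =>
    rw [show 2 * (n + 1) = 2 * n + 1 + 1 by ring]
    simp only [Nat.factorial_succ]
    calc 2 ^ (n + 1) * ((n + 1) * n !) ^ 2 = (n + 1) * (2 * n + 2) * (2 ^ n * n ! ^ 2) := by ring
      _ ≤ (2 * n + 1) * (2 * n + 2) * (2 * n)! := by gcongr; omega
      _ = (2 * n + 1 + 1) * ((2 * n + 1) * (2 * n)!) := by ring

theorem abs_hypConst_le {n e : ℕ} (he : 2 * n ≤ e) (s : ℕ) :
    |hypConst n s (n + s + 1) e| ≤ (1 / 2) ^ n / ((n : ℝ) + s + 1) ^ 4 := by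
  have hs : (n ! : ℝ) * s ! ≤ (n + s)! :=
    mod_cast Nat.le_of_dvd (Nat.factorial_pos _) (Nat.factorial_mul_factorial_dvd_factorial_add n s)
  have hn : (2 : ℝ) ^ n * (n ! : ℝ) ^ 2 ≤ e ! :=
    mod_cast (two_pow_mul_factorial_sq_le n).trans (Nat.factorial_le he)
  have habs : |hypConst n s (n + s + 1) e| =
      (n ! : ℝ) ^ 6 * (s ! : ℝ) ^ 4 / (((n + s + 1)! : ℝ) ^ 4 * e !) := by
    rw [hypConst, abs_div, mul_assoc, abs_mul, abs_neg_one_pow, one_mul, abs_of_nonneg,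
      abs_of_nonneg] <;> positivity
  rw [habs, one_div_pow, div_div, div_le_div_iff₀ (by positivity) (by positivity),
    Nat.factorial_succ]
  push_cast
  calc (n ! : ℝ) ^ 6 * (s ! : ℝ) ^ 4 * (2 ^ n * ((n : ℝ) + s + 1) ^ 4)
      = ((n : ℝ) + s + 1) ^ 4 * ((n ! : ℝ) * s !) ^ 4 * (2 ^ n * (n ! : ℝ) ^ 2) := by ring
    _ ≤ ((n : ℝ) + s + 1) ^ 4 * ((n + s)! : ℝ) ^ 4 * e ! := by gcongr
    _ = _ := by ring

theorem abs_hypCoeff_le (x y : ℝ) {n s e : ℕ} (hne : 2 * n ≤ e) (hes : e ≤ n + s + 1) :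
    |hypCoeff x y n s (n + s + 1) e| ≤ (1 / 2) ^ n / ((n : ℝ) + s + 1) ^ 4 *
      (84 * |x| * ((n : ℝ) + s + 1) + 12 * |y|) := by
  have hlog : |hypLogδ n s (n + s + 1) e| ≤ 5 * ((n : ℝ) + s + 1) := by
    have hes' : (e : ℝ) ≤ n + s + 1 := mod_cast hes
    refine (abs_hypLogδ_le _ _ _ _).trans ?_
    push_cast
    linarith
  rw [hypCoeff, abs_mul]
  gcongr
  · exact abs_hypConst_le hne s
  calc _ ≤ |x| * (|hypLogδq n s (n + s + 1)| +
          |hypLogδ n s (n + s + 1) e| * |hypLogq n s (n + s + 1)|) +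
        |y| * |hypLogq n s (n + s + 1)| := by
        refine (abs_add_le _ _).trans ?_
        rw [abs_mul, abs_mul, ← abs_mul (hypLogδ _ _ _ _)]
        gcongr
        exact abs_add_le _ _
    _ ≤ |x| * (24 + 5 * ((n : ℝ) + s + 1) * 12) + |y| * 12 := by
        gcongr
        exacts [abs_hypLogδq_le _ _ _, abs_hypLogq_le _ _ _, abs_hypLogq_le _ _ _]
    _ ≤ 84 * |x| * ((n : ℝ) + s + 1) + 12 * |y| := by
        have hgap : 0 ≤ |x| * ((n : ℝ) + s) := by positivity
        linarith

theorem abs_wzFCoeff_le (n k : ℕ) :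
    |wzFCoeff n k| ≤ 180 * (1 / 2) ^ n * (1 / ((k : ℝ) + 1) ^ 2) := by
  have hbound := abs_hypCoeff_le (3 * n + 2 * k + 2) 1 (n := n) (s := n + k) le_rfl (by omega)
  rw [show n + (n + k) + 1 = 2 * n + k + 1 by ring, ← wzFCoeff] at hbound
  set X : ℝ := (n : ℝ) + (n + k : ℕ) + 1 with hX
  push_cast at hX
  have hkX : (k : ℝ) + 1 ≤ X := by linarith [n.cast_nonneg (α := ℝ)]
  have hX1 : 1 ≤ X := by linarith [k.cast_nonneg (α := ℝ)]
  have hx : |3 * (n : ℝ) + 2 * k + 2| ≤ 2 * X := by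
    rw [abs_of_nonneg (by positivity)]
    linarith [n.cast_nonneg (α := ℝ)]
  calc |wzFCoeff n k| ≤ (1 / 2) ^ n / X ^ 4 * (84 * (2 * X) * X + 12 * X ^ 2) := by
        refine hbound.trans ?_
        rw [abs_one]
        gcongr
        exact one_le_pow₀ hX1
    _ = 180 * (1 / 2) ^ n * (1 / X ^ 2) := by
        field_simp
        norm_num
    _ ≤ 180 * (1 / 2) ^ n * (1 / ((k : ℝ) + 1) ^ 2) := by gcongr

theorem summable_wzFCoeff : Summable (Function.uncurry wzFCoeff) := by
  have hsum := (summable_geometric_two.mul_left 180).mul_of_nonneg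
    (summable_one_div_succ_pow le_rfl) (fun n => by positivity) (fun k => by positivity)
  exact .of_norm_bounded hsum fun nk => abs_wzFCoeff_le nk.1 nk.2

theorem abs_wzRemainderCoeff_le (n k : ℕ) :
    |wzRemainderCoeff n k| ≤ 456 * ((n : ℝ) + 1) * (1 / ((k : ℝ) + 1)) := by
  set u : ℝ := (2 * n + 2) * (2 * n + k + 2) * (3 * n + k + 3) + (n + 1) ^ 3 with hu
  set v : ℝ := (2 * n + k + 2) * (3 * n + k + 3) + (n + 1) ^ 2 with hv
  have hbound := abs_hypCoeff_le u (-v) (n := n) (s := n + k + 1) (e := 2 * n + 2)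
    (by omega) (by omega)
  rw [show n + (n + k + 1) + 1 = 2 * n + k + 2 by ring, hu, hv, ← wzRemainderCoeff, ← hu,
    ← hv] at hbound
  set X : ℝ := (n : ℝ) + (n + k + 1 : ℕ) + 1 with hX
  push_cast at hX
  have hnX : (n : ℝ) + 1 ≤ X := by linarith [n.cast_nonneg (α := ℝ), k.cast_nonneg (α := ℝ)]
  have hkX : (k : ℝ) + 1 ≤ X := by linarith [n.cast_nonneg (α := ℝ)]
  have hX1 : 1 ≤ X := by linarith [n.cast_nonneg (α := ℝ)]
  have hu_le : |u| ≤ 5 * (n + 1) * X ^ 2 := by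
    rw [abs_of_nonneg (by positivity)]
    calc u ≤ 2 * (n + 1) * X * (2 * X) + (n + 1) * X ^ 2 := by
          rw [hu, pow_succ']
          gcongr <;> linarith
      _ = 5 * (n + 1) * X ^ 2 := by ring
  have hv_le : |-v| ≤ 3 * (n + 1) * X ^ 3 := by
    rw [abs_neg, abs_of_nonneg (by positivity)]
    calc v ≤ X * (2 * X) + X ^ 2 := by
          rw [hv]
          gcongr <;> linarith
      _ = 3 * 1 * X ^ 2 := by ring
      _ ≤ 3 * (n + 1) * X ^ 3 := by
          gcongr
          · exact le_add_of_nonneg_left n.cast_nonneg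
          · norm_num
  calc |wzRemainderCoeff n k|
      ≤ (1 / 2) ^ n / X ^ 4 * (84 * (5 * (n + 1) * X ^ 2) * X + 12 * (3 * (n + 1) * X ^ 3)) := by
        refine hbound.trans ?_
        gcongr
    _ = (1 / 2) ^ n * (456 * (n + 1) * (1 / X)) := by
        field_simp
        norm_num
    _ ≤ 1 * (456 * (n + 1) * (1 / ((k : ℝ) + 1))) := by
        gcongr
        exact pow_le_one₀ (by norm_num) (by norm_num)
    _ = 456 * ((n : ℝ) + 1) * (1 / ((k : ℝ) + 1)) := one_mul _

theorem tendsto_wzGCoeff (n : ℕ) : Tendsto (wzGCoeff n) atTop (𝓝 0) := by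
  have hF : Tendsto (wzFCoeff n) atTop (𝓝 0) :=
    (summable_wzFCoeff.prod_factor n).tendsto_atTop_zero
  have hR : Tendsto (wzRemainderCoeff n) atTop (𝓝 0) :=
    squeeze_zero_norm (abs_wzRemainderCoeff_le n) <| by
      simpa only [mul_zero] using (tendsto_one_div_add_atTop_nhds_zero_nat (𝕜 := ℝ)).const_mul
        (456 * ((n : ℝ) + 1))
  rw [← add_zero (0 : ℝ)]
  exact hF.add hR

end Bounds

section BoundaryValues

theorem wzFCoeff_zero (k : ℕ) :
    wzFCoeff 0 k = 4 * doubleZetaTerm 3 5 k + 4 * doubleZetaTerm 7 1 k -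
      3 * (1 / ((k : ℝ) + 1) ^ 8) := by
  simp only [wzFCoeff, hypCoeff, hypConst, hypLogδ, hypLogq, hypLogδq, doubleZetaTerm, mul_zero,
    zero_add, genHarmonic_zero, genHarmonic_succ, Nat.factorial_succ, Nat.factorial_zero]
  push_cast
  field_simp
  ring

theorem tsum_wzFCoeff_zero : ∑' k, wzFCoeff 0 k = -4 * zeta53 - Real.pi ^ 8 / 4725 := by
  have h35 : HasSum (doubleZetaTerm 3 5) (doubleZeta 3 5) :=
    (summable_doubleZetaTerm (by norm_num) (by norm_num)).hasSum
  have h71 : HasSum (doubleZetaTerm 7 1) (doubleZeta 7 1) :=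
    (summable_doubleZetaTerm (by norm_num) le_rfl).hasSum
  have h8 := hasSum_zetaValue (s := 8) (by norm_num)
  have hzeta53 : zeta53 = doubleZeta 5 3 := rfl
  rw [tsum_congr wzFCoeff_zero,
    (((h35.mul_left 4).add (h71.mul_left 4)).sub (h8.mul_left 3)).tsum_eq, zetaValue_eight, hzeta53]
  linear_combination 4 * doubleZeta_odd_weight_eight

theorem risingFactorial_one (n : ℕ) : risingFactorial 1 n = n ! := by
  rw [risingFactorial, ← prod_range_cast_succ]
  exact prod_congr rfl fun i _ => by push_cast; ring

theorem risingFactorial_half (n : ℕ) :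
    risingFactorial (1 / 2) n = ((2 * n)! : ℝ) / (4 ^ n * n !) := by
  induction n with
  | zero => simp [risingFactorial]
  | succ n ih =>
    rw [risingFactorial, prod_range_succ, ← risingFactorial, ih,
      show 2 * (n + 1) = 2 * n + 1 + 1 by ring, Nat.factorial_succ, Nat.factorial_succ,
      Nat.factorial_succ]
    push_cast
    field_simp
    ring

theorem risingFactorial_quotient (n : ℕ) :
    (-1 / 2 ^ 10 : ℝ) ^ n * risingFactorial 1 n ^ 5 / risingFactorial (1 / 2) n ^ 5 =
      (-1) ^ n * (n ! : ℝ) ^ 10 / ((2 * n)! : ℝ) ^ 5 := by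
  have hpow : (-1 / 2 ^ 10 : ℝ) ^ n * ((4 : ℝ) ^ n) ^ 5 = (-1) ^ n := by
    rw [← pow_mul, mul_comm n 5, pow_mul, ← mul_pow]
    norm_num
  rw [← hpow, risingFactorial_one, risingFactorial_half]
  field_simp

theorem wzGCoeff_zero (n : ℕ) :
    wzGCoeff n 0 = (-1 / 2 ^ 10 : ℝ) ^ (n + 1) * (risingFactorial 1 (n + 1)) ^ 5 /
        (risingFactorial (1 / 2) (n + 1)) ^ 5 *
        ((351 - 1755 * ((n : ℝ) + 1) + 2240 * ((n : ℝ) + 1) ^ 2) / ((n : ℝ) + 1) ^ 10 -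
          (11 * genHarmonic 5 (n + 1) - genHarmonic 5 (2 * (n + 1))) *
            (205 * ((n : ℝ) + 1) ^ 2 - 160 * ((n : ℝ) + 1) + 32) / ((n : ℝ) + 1) ^ 5) := by
  have hn : (n : ℝ) + 1 ≠ 0 := by positivity
  have hn' : 2 * (n : ℝ) + 1 ≠ 0 := by positivity
  simp only [risingFactorial_quotient, show 2 * (n + 1) = 2 * n + 1 + 1 by ring, wzGCoeff,
    wzFCoeff, wzRemainderCoeff, hypCoeff, hypConst, hypLogδ, hypLogq, hypLogδq, add_zero,
    genHarmonic_succ, Nat.factorial_succ]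
  push_cast
  field_simp
  ring

end BoundaryValues

/-- A fast-converging series for `ζ(5,3)`:
`∑_{n≥1} (−1/2^10)^n (1)ₙ^5/(1/2)ₙ^5
  [ (351−1755n+2240n²)/n^10 − (11 H_n^{(5)} − H_{2n}^{(5)})(205n²−160n+32)/n^5 ]
  = −4ζ(5,3) − π^8/4725`. -/
theorem zeta53_series :
    ∑' n : ℕ, ((-1 / 2 ^ 10 : ℝ) ^ (n + 1) * (risingFactorial 1 (n + 1)) ^ 5 /
        (risingFactorial (1 / 2) (n + 1)) ^ 5 *
        ((351 - 1755 * ((n : ℝ) + 1) + 2240 * ((n : ℝ) + 1) ^ 2) / ((n : ℝ) + 1) ^ 10 -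
          (11 * genHarmonic 5 (n + 1) - genHarmonic 5 (2 * (n + 1))) *
            (205 * ((n : ℝ) + 1) ^ 2 - 160 * ((n : ℝ) + 1) + 32) / ((n : ℝ) + 1) ^ 5))
      = -4 * zeta53 - Real.pi ^ 8 / 4725 := by
  rw [← tsum_wzFCoeff_zero, ← (hasSum_of_wz_pair summable_wzFCoeff tendsto_wzGCoeff
    wzFCoeff_sub_wzFCoeff_succ).tsum_eq]
  exact tsum_congr fun n => (wzGCoeff_zero n).symm
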